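/- Fix γ > 1 and let A(w), B(w) be the primitive-variable Euler coefficient matrices: for w = (ρ,u,v,p) with ρ > 0, A(w) has rows (u, ρ, 0, 0), (0, u, 0, 1/ρ), (0, 0, u, 0), (0, γp, 0, u) and B(w) has rows (v, 0, ρ, 0), (0, v, 0, 0), (0, 0, v, 1/ρ), (0, 0, γp, v). Let u : ℝ² × ℝ → ℝ⁴ be three times continuously differentiable on a neighbourhood of (x̄,ȳ,t_n), with first component (density) everywhere positive there, and satisfy ∂_t u + A(u) ∂_x u + B(u) ∂_y u = 0. For τ ∈ (0,τ₀] let w_τ ∈ ℝ⁴ satisfy ‖ w_τ − u(x̄,ȳ,t_n+τ/2) ‖ ≤ K τ² for a constant K, and let v_τ be a three times continuously differentiable solution of ∂_t v + A(w_τ) ∂_x v + B(w_τ) ∂_y v = 0 with v_τ(x,y,t_n) = u(x,y,t_n) on a neighbourhood of (x̄,ȳ), such that all partial derivatives of the family {v_τ} up to order three are bounded uniformly in τ. Define the correction term C(τ) = (τ²/2)·( ρ(f₁+f₂) + u(ρ_x(2u_x+v_y)+ρ_y v_x) + v(ρ_x u_y+ρ_y(u_x+2v_y)) − h₁ , u f₁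 + v u_y(u_x+v_y) + g₁/ρ − p_x h₂ , v f₂ + u v_x(u_x+v_y) + g₂/ρ − p_y h₂ , u g₁ + v g₂ + γ p (f₁+f₂−h₁/ρ) ), where ρ, u, v, p are the components of u(x̄,ȳ,t_n), subscripts x and y denote the corresponding components of ∂_x u and ∂_y u at (x̄,ȳ,t_n), and f₁ = u_x²+u_y v_x, f₂ = u_y v_x+v_y², g₁ = p_x(γ(u_x+v_y)+u_x)+p_y v_x, g₂ = p_y(γ(u_x+v_y)+v_y)+p_x u_y, h₁ = (ρ_x p_x+ρ_y p_y)/ρ, h₂ = (ρ_x u+ρ_y v)/ρ². Then there exist constants C > 0 and τ₁ ∈ (0,τ₀] such that for all τ ∈ (0,τ₁]: ‖ v_τ(x̄,ȳ,t_n+τ) + C(τ) − u(x̄,ȳ,t_n+τ) ‖ ≤ C τ³. -/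

import Mathlib

/-!
Write `Φ(w) = A(w) u_x + B(w) u_y` and `Ψ(w) = A(w)(A(w) u_xx + B(w) u_xy) + B(w)(A(w) u_xy + B(w) u_yy)`,
with the space derivatives of `u` taken at `z₀ = (xb, yb, tn)`. Because `v_τ` and `u` have the same
initial data, the equation and its derivatives (`fderiv_pde`, `fderiv_eq_of_eventuallyEq_comp`) give
at `z₀`
`v_t = -Φ(w_τ)`, `v_tt = Ψ(w_τ)`, `u_t = -Φ(u)`, `u_tt = Ψ(u) - Φ'(u) u_t + A(u) X + B(u) Y`,
where `X` and `Y` are the terms of `(A(u) u_x + B(u) u_y)_x` and `(A(u) u_x + B(u) u_y)_y` in which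
the coefficients are differentiated. In components, the correction vector is exactly
`A(u) X + B(u) Y`.

Taylor expansion in time, with third-order remainders that are uniform in `τ` by the derivative
bound on `v_τ` (`norm_taylor_two_le`), reduces the claim to
`τ (Φ(w_τ) - Φ(u) - (τ/2) Φ'(u) u_t) = O(τ³)` and `τ² (Ψ(w_τ) - Ψ(u)) = O(τ³)`.
The first holds since `w_τ` approximates `u` at the midpoint `tn + τ/2` to second order, the second
since `w_τ - u = O(τ)`.
-/


/-- Partial derivative in the `x`-direction of a function of `(x, y, t) : ℝ × ℝ × ℝ`. -/
noncomputable def pdx {E : Type*} [NormedAddCommGroup E] [NormedSpace ℝ E]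
    (f : ℝ × ℝ × ℝ → E) (z : ℝ × ℝ × ℝ) : E := fderiv ℝ f z ((1:ℝ), (0:ℝ), (0:ℝ))

/-- Partial derivative in the `y`-direction. -/
noncomputable def pdy {E : Type*} [NormedAddCommGroup E] [NormedSpace ℝ E]
    (f : ℝ × ℝ × ℝ → E) (z : ℝ × ℝ × ℝ) : E := fderiv ℝ f z ((0:ℝ), (1:ℝ), (0:ℝ))

/-- Partial derivative in the `t`-direction. -/
noncomputable def pdt {E : Type*} [NormedAddCommGroup E] [NormedSpace ℝ E]
    (f : ℝ × ℝ × ℝ → E) (z : ℝ × ℝ × ℝ) : E := fderiv ℝ f z ((0:ℝ), (0:ℝ), (1:ℝ))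

/-- Matrix–vector multiplication for a `4 × 4` matrix given as `Fin 4 → Fin 4 → ℝ`. -/
def mvec (M : Fin 4 → Fin 4 → ℝ) (x : Fin 4 → ℝ) : Fin 4 → ℝ :=
  fun i => ∑ j, M i j * x j

/-- Coefficient matrix `A(w)` of the 2D Euler equations in primitive variables
`w = (ρ, u, v, p)`. -/
noncomputable def eulerA (γ : ℝ) (w : Fin 4 → ℝ) : Fin 4 → Fin 4 → ℝ :=
  ![![w 1, w 0, 0, 0],
    ![0, w 1, 0, (w 0)⁻¹],
    ![0, 0, w 1, 0],
    ![0, γ * w 3, 0, w 1]]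

/-- Coefficient matrix `B(w)` of the 2D Euler equations in primitive variables
`w = (ρ, u, v, p)`. -/
noncomputable def eulerB (γ : ℝ) (w : Fin 4 → ℝ) : Fin 4 → Fin 4 → ℝ :=
  ![![w 2, 0, w 0, 0],
    ![0, w 2, 0, 0],
    ![0, 0, w 2, (w 0)⁻¹],
    ![0, 0, γ * w 3, w 2]]

/-! ### The Euler flux and its derivative -/

open Filter Topology Asymptotics

/-- Derivative of `w ↦ eulerA γ w` at `w` in the direction `d`. -/
noncomputable def eulerDA (γ : ℝ) (w d : Fin 4 → ℝ) : Fin 4 → Fin 4 → ℝ :=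
  ![![d 1, d 0, 0, 0],
    ![0, d 1, 0, -d 0 / w 0 ^ 2],
    ![0, 0, d 1, 0],
    ![0, γ * d 3, 0, d 1]]

/-- Derivative of `w ↦ eulerB γ w` at `w` in the direction `d`. -/
noncomputable def eulerDB (γ : ℝ) (w d : Fin 4 → ℝ) : Fin 4 → Fin 4 → ℝ :=
  ![![d 2, 0, d 0, 0],
    ![0, d 2, 0, 0],
    ![0, 0, d 2, -d 0 / w 0 ^ 2],
    ![0, 0, γ * d 3, d 2]]

/-- The spatial operator `A(w) p + B(w) q`, with `p`, `q` in place of the space derivatives. -/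
noncomputable def eulerFlux (γ : ℝ) (w p q : Fin 4 → ℝ) : Fin 4 → ℝ :=
  mvec (eulerA γ w) p + mvec (eulerB γ w) q

/-- Derivative of `w ↦ eulerFlux γ w p q` at `w` in the direction `d`. -/
noncomputable def eulerDFlux (γ : ℝ) (w d p q : Fin 4 → ℝ) : Fin 4 → ℝ :=
  mvec (eulerDA γ w d) p + mvec (eulerDB γ w d) q

theorem eulerFlux_eq (γ : ℝ) (w p q : Fin 4 → ℝ) :
    eulerFlux γ w p q =
      ![(w 1 * p 0 + w 0 * p 1) + (w 2 * q 0 + w 0 * q 2),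
        (w 1 * p 1 + (w 0)⁻¹ * p 3) + w 2 * q 1,
        w 1 * p 2 + (w 2 * q 2 + (w 0)⁻¹ * q 3),
        (γ * w 3 * p 1 + w 1 * p 3) + (γ * w 3 * q 2 + w 2 * q 3)] := by
  ext i
  fin_cases i <;> simp [eulerFlux, mvec, Fin.sum_univ_four, eulerA, eulerB]

theorem eulerDFlux_eq (γ : ℝ) (w d p q : Fin 4 → ℝ) :
    eulerDFlux γ w d p q =
      ![(d 1 * p 0 + d 0 * p 1) + (d 2 * q 0 + d 0 * q 2),
        (d 1 * p 1 + -d 0 / w 0 ^ 2 * p 3) + d 2 * q 1,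
        d 1 * p 2 + (d 2 * q 2 + -d 0 / w 0 ^ 2 * q 3),
        (γ * d 3 * p 1 + d 1 * p 3) + (γ * d 3 * q 2 + d 2 * q 3)] := by
  ext i
  fin_cases i <;> simp [eulerDFlux, mvec, Fin.sum_univ_four, eulerDA, eulerDB]

/-- Additivity of `eulerFlux γ w` in the pair of space derivatives. -/
theorem eulerFlux_add (γ : ℝ) (w p q p' q' : Fin 4 → ℝ) :
    eulerFlux γ w (p + p') (q + q') = eulerFlux γ w p q + eulerFlux γ w p' q' := by
  ext i
  fin_cases i <;>
    simp [eulerFlux_eq] <;> ring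

theorem eulerFlux_neg (γ : ℝ) (w p q : Fin 4 → ℝ) :
    eulerFlux γ w (-p) (-q) = -eulerFlux γ w p q := by
  ext i
  fin_cases i <;>
    simp [eulerFlux_eq] <;> ring

theorem eulerDFlux_zero (γ : ℝ) (w p q : Fin 4 → ℝ) : eulerDFlux γ w 0 p q = 0 := by
  ext i
  fin_cases i <;>
    simp [eulerDFlux, mvec, Fin.sum_univ_four, eulerDA, eulerDB]

theorem hasDerivAt_eulerFlux (γ : ℝ) {w p q : ℝ → Fin 4 → ℝ} {w' p' q' : Fin 4 → ℝ} {s : ℝ}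
    (hw : HasDerivAt w w' s) (hp : HasDerivAt p p' s) (hq : HasDerivAt q q' s)
    (h0 : w s 0 ≠ 0) :
    HasDerivAt (fun r => eulerFlux γ (w r) (p r) (q r))
      (eulerFlux γ (w s) p' q' + eulerDFlux γ (w s) w' (p s) (q s)) s := by
  rw [hasDerivAt_pi] at hw hp hq ⊢
  have hi := (hw 0).fun_inv h0
  intro i
  simp only [eulerFlux_eq, eulerDFlux_eq]
  fin_cases i
  · exact ((((hw 1).fun_mul (hp 0)).fun_add ((hw 0).fun_mul (hp 1))).fun_add
      (((hw 2).fun_mul (hq 0)).fun_add ((hw 0).fun_mul (hq 2)))).congr_deriv (by simp; ring)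
  · exact ((((hw 1).fun_mul (hp 1)).fun_add (hi.fun_mul (hp 3))).fun_add
      ((hw 2).fun_mul (hq 1))).congr_deriv (by simp; ring)
  · exact (((hw 1).fun_mul (hp 2)).fun_add
      (((hw 2).fun_mul (hq 2)).fun_add (hi.fun_mul (hq 3)))).congr_deriv (by simp; ring)
  · exact (((((hw 3).const_mul γ).fun_mul (hp 1)).fun_add ((hw 1).fun_mul (hp 3))).fun_add
      ((((hw 3).const_mul γ).fun_mul (hq 2)).fun_add ((hw 2).fun_mul (hq 3)))).congr_deriv
      (by simp; ring)

theorem ContDiffAt.eulerFlux {E : Type*} [NormedAddCommGroup E] [NormedSpace ℝ E] {n : WithTop ℕ∞}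
    (γ : ℝ) {w p q : E → Fin 4 → ℝ} {x : E}
    (hw : ContDiffAt ℝ n w x) (hp : ContDiffAt ℝ n p x) (hq : ContDiffAt ℝ n q x)
    (h0 : w x 0 ≠ 0) :
    ContDiffAt ℝ n (fun y => eulerFlux γ (w y) (p y) (q y)) x := by
  rw [contDiffAt_pi] at hw hp hq ⊢
  have hw0 := hw 0
  have hw1 := hw 1
  have hw2 := hw 2
  have hw3 := hw 3
  have hi := hw0.inv h0
  have hp0 := hp 0
  have hp1 := hp 1
  have hp2 := hp 2
  have hp3 := hp 3
  have hq0 := hq 0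
  have hq1 := hq 1
  have hq2 := hq 2
  have hq3 := hq 3
  intro i
  fin_cases i <;>
    simp [eulerFlux_eq] <;> fun_prop

/-! ### Taylor estimates and derivatives along a subspace -/

section Taylor

variable {E F : Type*} [NormedAddCommGroup E] [NormedSpace ℝ E]
  [NormedAddCommGroup F] [NormedSpace ℝ F]

/-- Integrating a bound `M s ^ k` on the derivative; the constant is not optimal, but iterating it
yields Taylor remainders. -/
theorem norm_le_pow_succ_of_deriv {r r' : ℝ → F} {T M : ℝ} (hM : 0 ≤ M) {k : ℕ}
    (h0 : r 0 = 0) (hd : ∀ s ∈ Set.Icc 0 T, HasDerivAt r (r' s) s)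
    (hb : ∀ s ∈ Set.Icc 0 T, ‖r' s‖ ≤ M * s ^ k) :
    ∀ s ∈ Set.Icc 0 T, ‖r s‖ ≤ M * s ^ (k + 1) := by
  intro s hs
  have := norm_image_sub_le_of_norm_deriv_le_segment' (f := r) (f' := r') (C := M * s ^ k)
    (a := 0) (b := s)
    (fun x hx => (hd x ⟨hx.1, hx.2.trans hs.2⟩).hasDerivWithinAt)
    (fun x hx => (hb x ⟨hx.1, hx.2.le.trans hs.2⟩).trans (by
      have := hx.1
      have := hx.2.le
      gcongr)) s ⟨hs.1, le_rfl⟩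
  rw [h0, sub_zero, sub_zero] at this
  rw [pow_succ, ← mul_assoc]
  exact this

theorem hasDerivAt_line {f : E → F} {z e : E} {s : ℝ} (hf : DifferentiableAt ℝ f (z + s • e)) :
    HasDerivAt (fun r : ℝ => f (z + r • e)) (fderiv ℝ f (z + s • e) e) s := by
  have h1 : HasDerivAt (fun r : ℝ => z + r • e) e s := by
    simpa using ((hasDerivAt_id s).smul_const e).const_add z
  exact hf.hasFDerivAt.comp_hasDerivAt s h1

theorem norm_fderiv_fderiv_apply_le (g : E → F) (z a b : E) :
    ‖fderiv ℝ (fderiv ℝ g) z a b‖ ≤ ‖iteratedFDeriv ℝ 2 g z‖ * ‖a‖ * ‖b‖ := by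
  have h : ‖fderiv ℝ (fderiv ℝ g) z‖ = ‖iteratedFDeriv ℝ 2 g z‖ := by
    rw [← norm_iteratedFDeriv_fderiv, ← norm_iteratedFDeriv_fderiv, norm_iteratedFDeriv_zero]
  rw [← h]
  exact ContinuousLinearMap.le_opNorm₂ _ _ _

/-- Second-order Taylor expansion along the line `z + s • e`, with a constant depending only on a
bound for the third derivative, so that it is uniform over a family of functions. -/
theorem norm_taylor_two_le {f : E → F} {z e : E} {T M : ℝ} (hM : 0 ≤ M) (he : ‖e‖ ≤ 1)
    (hf : ∀ s ∈ Set.Icc 0 T, ContDiffAt ℝ 3 f (z + s • e))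
    (hb : ∀ s ∈ Set.Icc 0 T, ‖iteratedFDeriv ℝ 3 f (z + s • e)‖ ≤ M) :
    ∀ s ∈ Set.Icc 0 T, ‖f (z + s • e) - f z - s • fderiv ℝ f z e
      - (s ^ 2 / 2) • fderiv ℝ (fderiv ℝ f) z e e‖ ≤ M * s ^ 3 := by
  have hf1 : ∀ s ∈ Set.Icc 0 T, ContDiffAt ℝ 2 (fderiv ℝ f) (z + s • e) := fun s hs =>
    (hf s hs).fderiv_right (by norm_num)
  have hf2 : ∀ s ∈ Set.Icc 0 T, ContDiffAt ℝ 1 (fderiv ℝ (fderiv ℝ f)) (z + s • e) := fun s hs =>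
    (hf1 s hs).fderiv_right (by norm_num)
  have d0 := fun s hs => hasDerivAt_line ((hf s hs).differentiableAt (by norm_num))
  have d1 := fun s hs => (hasDerivAt_line
    ((hf1 s hs).differentiableAt (by norm_num))).clm_apply (hasDerivAt_const s e)
  have d2 := fun s hs => ((hasDerivAt_line
    ((hf2 s hs).differentiableAt (by norm_num))).clm_apply (hasDerivAt_const s e)).clm_apply
      (hasDerivAt_const s e)
  simp only [map_zero, add_zero] at d1 d2
  have hb3 : ∀ s ∈ Set.Icc 0 T,
      ‖fderiv ℝ (fderiv ℝ (fderiv ℝ f)) (z + s • e) e e e‖ ≤ M * s ^ 0 := by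
    intro s hs
    have h3 := norm_fderiv_fderiv_apply_le (fderiv ℝ f) (z + s • e) e e
    rw [norm_iteratedFDeriv_fderiv] at h3
    have h4 := hb s hs
    calc _ ≤ ‖fderiv ℝ (fderiv ℝ (fderiv ℝ f)) (z + s • e) e e‖ * ‖e‖ :=
          ContinuousLinearMap.le_opNorm _ _
      _ ≤ (M * 1 * 1) * 1 := by
          have : ‖fderiv ℝ (fderiv ℝ (fderiv ℝ f)) (z + s • e) e e‖ ≤ M * 1 * 1 :=
            h3.trans (by gcongr)
          gcongr
      _ = _ := by simp
  have s2 := norm_le_pow_succ_of_deriv hM (r := fun s =>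
      fderiv ℝ (fderiv ℝ f) (z + s • e) e e - fderiv ℝ (fderiv ℝ f) z e e) (by simp)
    (fun s hs => (d2 s hs).sub_const _) hb3
  have s1 := norm_le_pow_succ_of_deriv hM (r := fun s =>
      fderiv ℝ f (z + s • e) e - fderiv ℝ f z e - s • fderiv ℝ (fderiv ℝ f) z e e) (by simp)
    (fun s hs => (((d1 s hs).sub_const _).fun_sub
      ((hasDerivAt_id s).smul_const _)).congr_deriv (by simp)) s2
  exact norm_le_pow_succ_of_deriv hM (r := fun s =>
      f (z + s • e) - f z - s • fderiv ℝ f z e - (s ^ 2 / 2) • fderiv ℝ (fderiv ℝ f) z e e)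
    (by simp)
    (fun s hs => ((((d0 s hs).sub_const _).fun_sub
      ((hasDerivAt_id s).smul_const _)).fun_sub
        ((((hasDerivAt_id s).fun_pow 2).div_const 2).smul_const _)).congr_deriv (by simp)) s1

/-- First-order Taylor expansion at `0`: near `0` the derivative of a `C²` function is `g' + O(s)`. -/
theorem taylor_one_isBigO {g : ℝ → F} {g' : F} (hg : ContDiffAt ℝ 2 g 0) (hd : HasDerivAt g g' 0) :
    (fun s => g s - g 0 - s • g') =O[𝓝[>] 0] fun s => s ^ 2 := by
  have hC : ContDiffAt ℝ 1 (deriv g) 0 := by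
    have := (hg.fderiv_right (m := 1) (by norm_num)).clm_apply
      (contDiffAt_const (c := (1 : ℝ)))
    exact this
  have hB := (hC.differentiableAt (by norm_num)).isBigO_sub
  obtain ⟨c, hc0, hc⟩ := hB.exists_nonneg
  rw [IsBigOWith] at hc
  have hD : ∀ᶠ s in 𝓝 (0 : ℝ), DifferentiableAt ℝ g s :=
    (hg.eventually (by simp)).mono fun s hs => hs.differentiableAt (by norm_num)
  obtain ⟨ε, hε, hball⟩ := Metric.eventually_nhds_iff.1 (hc.and hD)
  have key := norm_le_pow_succ_of_deriv (T := ε / 2) (k := 1) hc0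
    (r := fun s => g s - g 0 - s • g') (r' := fun s => deriv g s - g') (by simp)
    (fun s hs => by
      have := (hball (y := s) (by
        rw [Real.dist_eq, sub_zero, abs_of_nonneg hs.1]; linarith [hs.2])).2
      exact ((this.hasDerivAt.sub_const _).fun_sub
        ((hasDerivAt_id s).smul_const _)).congr_deriv (by simp))
    (fun s hs => by
      have := (hball (y := s) (by
        rw [Real.dist_eq, sub_zero, abs_of_nonneg hs.1]; linarith [hs.2])).1
      rw [hd.deriv, sub_zero, Real.norm_of_nonneg hs.1] at this
      simpa using this)
  refine IsBigO.of_bound c ?_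
  filter_upwards [Ioo_mem_nhdsGT (show (0 : ℝ) < ε / 2 by linarith)] with s hs
  rw [Real.norm_of_nonneg (by positivity)]
  exact key s ⟨hs.1.le, hs.2.le⟩

/-- If `f` and `g` agree on an affine image `z + L q` of a neighbourhood of `0`, their first and
second derivatives at `z` agree along the range of `L`. -/
theorem fderiv_eq_of_eventuallyEq_comp {H : Type*} [NormedAddCommGroup H] [NormedSpace ℝ H]
    {f g : E → F} {z : E} (L : H →L[ℝ] E) (hf : ContDiffAt ℝ 3 f z) (hg : ContDiffAt ℝ 3 g z)
    (h : ∀ᶠ q in 𝓝 (0 : H), f (z + L q) = g (z + L q)) :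
    (∀ a, fderiv ℝ f z (L a) = fderiv ℝ g z (L a)) ∧
    ∀ a b, fderiv ℝ (fderiv ℝ f) z (L a) (L b) = fderiv ℝ (fderiv ℝ g) z (L a) (L b) := by
  have hL : ∀ q, HasFDerivAt (fun q => z + L q) L q := fun q => L.hasFDerivAt.const_add z
  have ht : Tendsto (fun q => z + L q) (𝓝 0) (𝓝 z) := by
    simpa using (hL 0).continuousAt.tendsto
  have key : ∀ a, ∀ᶠ q in 𝓝 (0 : H), fderiv ℝ f (z + L q) (L a) = fderiv ℝ g (z + L q) (L a) := by
    intro a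
    filter_upwards [h.eventually_nhds, ht.eventually (hf.eventually (by simp)),
      ht.eventually (hg.eventually (by simp))] with q hq hfq hgq
    have h1 := ((hfq.differentiableAt (by norm_num)).hasFDerivAt.comp q (hL q))
    have h2 := ((hgq.differentiableAt (by norm_num)).hasFDerivAt.comp q (hL q))
    have := h1.unique (h2.congr_of_eventuallyEq hq)
    exact DFunLike.congr_fun this a
  refine ⟨fun a => by simpa using (key a).self_of_nhds, fun a b => ?_⟩
  have hz : z + L 0 = z := by simp
  have h1 := (((hf.fderiv_right (m := 2) (by norm_num)).differentiableAt (by norm_num))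
    |>.hasFDerivAt)
  have h2 := (((hg.fderiv_right (m := 2) (by norm_num)).differentiableAt (by norm_num))
    |>.hasFDerivAt)
  rw [← hz] at h1 h2
  have h1' := (h1.comp 0 (hL 0)).clm_apply (hasFDerivAt_const (L b) 0)
  have h2' := (h2.comp 0 (hL 0)).clm_apply (hasFDerivAt_const (L b) 0)
  have := h1'.unique (h2'.congr_of_eventuallyEq (key b))
  simpa using DFunLike.congr_fun this a

end Taylor

/-! ### Differentiating the equation -/

/-- The quasilinear system `f_t + A(w) f_x + B(w) f_y = 0`, differentiated in a direction `e`;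
the choices `w = f` and `w` constant cover the nonlinear and the linearised system. -/
theorem fderiv_pde (γ : ℝ) {f w : ℝ × ℝ × ℝ → Fin 4 → ℝ} {z : ℝ × ℝ × ℝ}
    (hf : ContDiffAt ℝ 3 f z) (hw : DifferentiableAt ℝ w z) (h0 : w z 0 ≠ 0)
    (h : ∀ᶠ y in 𝓝 z, pdt f y + mvec (eulerA γ (w y)) (pdx f y)
      + mvec (eulerB γ (w y)) (pdy f y) = 0) (e : ℝ × ℝ × ℝ) :
    fderiv ℝ (fderiv ℝ f) z e (0, 0, 1)
      = -eulerFlux γ (w z) (fderiv ℝ (fderiv ℝ f) z e (1, 0, 0))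
          (fderiv ℝ (fderiv ℝ f) z e (0, 1, 0))
        - eulerDFlux γ (w z) (fderiv ℝ w z e) (pdx f z) (pdy f z) := by
  have hz : z + (0 : ℝ) • e = z := by simp
  have hD : DifferentiableAt ℝ (fderiv ℝ f) (z + (0 : ℝ) • e) := by
    rw [hz]; exact (hf.fderiv_right (m := 2) (by norm_num)).differentiableAt (by norm_num)
  have d : ∀ a, HasDerivAt (fun r : ℝ => fderiv ℝ f (z + r • e) a)
      (fderiv ℝ (fderiv ℝ f) (z + (0 : ℝ) • e) e a) 0 := by
    intro a
    simpa using (hasDerivAt_line hD).clm_apply (hasDerivAt_const 0 a)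
  have hF := hasDerivAt_eulerFlux γ (hasDerivAt_line (by rwa [hz])) (d (1, 0, 0)) (d (0, 1, 0))
    (w := fun r => w (z + r • e)) (by simpa using h0)
  have hsum := (d (0, 0, 1)).fun_add hF
  have ht : Tendsto (fun r : ℝ => z + r • e) (𝓝 0) (𝓝 z) := by
    have : Continuous (fun r : ℝ => z + r • e) := by fun_prop
    simpa using this.tendsto 0
  have hzero := hsum.unique ((hasDerivAt_const 0 0).congr_of_eventuallyEq
    ((ht.eventually h).mono fun r hr => by
      simpa [eulerFlux, add_assoc, pdt, pdx, pdy] using hr))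
  rw [hz] at hzero
  simp only [pdx, pdy]
  rw [eq_sub_iff_add_eq, eq_neg_iff_add_eq_zero, ← hzero]
  abel

/-! ### The error estimate -/

/-- Third order accuracy of the locally linearised evolution with the explicit
correction term for the 2D Euler equations in primitive variables. -/
theorem euler_linearisation_third_order_with_correction
    (γ : ℝ) (hγ : 1 < γ)
    (u : ℝ × ℝ × ℝ → (Fin 4 → ℝ))
    (xb yb tn τ₀ : ℝ) (hτ₀ : 0 < τ₀)
    -- u is C³ on a neighbourhood of (xb, yb, tn), has positive density there,
    -- and solves the primitive-variable Euler system there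
    (Ω : Set (ℝ × ℝ × ℝ)) (hΩ : IsOpen Ω) (hz₀ : (xb, yb, tn) ∈ Ω)
    (hu : ContDiffOn ℝ 3 u Ω)
    (hpos : ∀ z ∈ Ω, 0 < u z 0)
    (hupde : ∀ z ∈ Ω,
      pdt u z + mvec (eulerA γ (u z)) (pdx u z) + mvec (eulerB γ (u z)) (pdy u z) = 0)
    -- the linearisation states w_τ approximate u(xb, yb, tn + τ/2) to order τ²
    (W : ℝ → (Fin 4 → ℝ)) (K : ℝ)
    (hW : ∀ τ ∈ Set.Ioc 0 τ₀, ‖W τ - u (xb, yb, tn + τ / 2)‖ ≤ K * τ ^ 2)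
    -- the family v_τ of C³ solutions of the constant-coefficient systems with
    -- coefficients A(w_τ), B(w_τ)
    (V : ℝ → ℝ × ℝ × ℝ → (Fin 4 → ℝ))
    (Ω' : Set (ℝ × ℝ × ℝ)) (hΩ' : IsOpen Ω')
    (hseg : ∀ t ∈ Set.Icc tn (tn + τ₀), (xb, yb, t) ∈ Ω')
    (hV : ∀ τ ∈ Set.Ioc 0 τ₀, ContDiffOn ℝ 3 (V τ) Ω')
    (hVpde : ∀ τ ∈ Set.Ioc 0 τ₀, ∀ z ∈ Ω',
      pdt (V τ) z + mvec (eulerA γ (W τ)) (pdx (V τ) z)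
        + mvec (eulerB γ (W τ)) (pdy (V τ) z) = 0)
    -- v_τ agrees with u at time tn on a spatial neighbourhood of (xb, yb)
    (U : Set (ℝ × ℝ)) (hU : IsOpen U) (hxyU : (xb, yb) ∈ U)
    (hinit : ∀ τ ∈ Set.Ioc 0 τ₀, ∀ xy ∈ U, V τ (xy.1, xy.2, tn) = u (xy.1, xy.2, tn))
    -- derivatives of the family {v_τ} up to order three are bounded uniformly in τ
    (M : ℝ) (hbdd : ∀ τ ∈ Set.Ioc 0 τ₀, ∀ z ∈ Ω', ∀ i : ℕ, i ≤ 3 →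
      ‖iteratedFDerivWithin ℝ i (V τ) Ω' z‖ ≤ M)
    -- names for the components of u and its spatial derivatives at (xb, yb, tn)
    (rho uu vv pp rx ry ux uy vx vy px py : ℝ)
    (hrho : rho = u (xb, yb, tn) 0) (huu : uu = u (xb, yb, tn) 1)
    (hvv : vv = u (xb, yb, tn) 2) (hpp : pp = u (xb, yb, tn) 3)
    (hrx : rx = pdx u (xb, yb, tn) 0) (hux : ux = pdx u (xb, yb, tn) 1)
    (hvx : vx = pdx u (xb, yb, tn) 2) (hpx : px = pdx u (xb, yb, tn) 3)
    (hry : ry = pdy u (xb, yb, tn) 0) (huy : uy = pdy u (xb, yb, tn) 1)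
    (hvy : vy = pdy u (xb, yb, tn) 2) (hpy : py = pdy u (xb, yb, tn) 3)
    (f₁ f₂ g₁ g₂ h₁ h₂ : ℝ)
    (hf₁ : f₁ = ux ^ 2 + uy * vx)
    (hf₂ : f₂ = uy * vx + vy ^ 2)
    (hg₁ : g₁ = px * (γ * (ux + vy) + ux) + py * vx)
    (hg₂ : g₂ = py * (γ * (ux + vy) + vy) + px * uy)
    (hh₁ : h₁ = (rx * px + ry * py) / rho)
    (hh₂ : h₂ = (rx * uu + ry * vv) / rho ^ 2) :
    ∃ C > (0:ℝ), ∃ τ₁ ∈ Set.Ioc 0 τ₀, ∀ τ ∈ Set.Ioc 0 τ₁,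
      ‖V τ (xb, yb, tn + τ)
        + (τ ^ 2 / 2) • ![rho * (f₁ + f₂) + uu * (rx * (2 * ux + vy) + ry * vx)
              + vv * (rx * uy + ry * (ux + 2 * vy)) - h₁,
            uu * f₁ + vv * uy * (ux + vy) + g₁ / rho - px * h₂,
            vv * f₂ + uu * vx * (ux + vy) + g₂ / rho - py * h₂,
            uu * g₁ + vv * g₂ + γ * pp * (f₁ + f₂ - h₁ / rho)]
        - u (xb, yb, tn + τ)‖ ≤ C * τ ^ 3 := by
  set z₀ : ℝ × ℝ × ℝ := (xb, yb, tn) with hz₀def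
  set e : ℝ × ℝ × ℝ := (0, 0, 1) with hedef
  have hline : ∀ s : ℝ, (xb, yb, tn + s) = z₀ + s • e := fun s => by simp [hz₀def, hedef]
  have hen : ‖e‖ ≤ 1 := by simp [hedef, Prod.norm_def]
  simp only [hline] at hW ⊢
  have huC : ContDiffAt ℝ 3 u z₀ := hu.contDiffAt (hΩ.mem_nhds hz₀)
  have hline_t : Tendsto (fun s : ℝ => z₀ + s • e) (𝓝 0) (𝓝 z₀) := by
    have : Continuous (fun r : ℝ => z₀ + r • e) := by fun_prop
    simpa using this.tendsto 0
  have hIoc : ∀ᶠ τ in 𝓝[>] (0 : ℝ), τ ∈ Set.Ioc 0 τ₀ := Ioc_mem_nhdsGT hτ₀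
  have hhalf : Tendsto (fun τ : ℝ => τ / 2) (𝓝[>] 0) (𝓝[>] 0) := by
    refine tendsto_nhdsWithin_iff.2 ⟨?_, ?_⟩
    · have : Tendsto (fun τ : ℝ => τ / 2) (𝓝 0) (𝓝 (0 / 2)) := tendsto_id.div_const 2
      rw [zero_div] at this
      exact this.mono_left nhdsWithin_le_nhds
    · filter_upwards [self_mem_nhdsWithin] with τ hτ
      exact half_pos (Set.mem_Ioi.1 hτ)
  have hhalfO : ∀ k : ℕ, (fun τ : ℝ => (τ / 2) ^ k) =O[𝓝[>] 0] fun τ => τ ^ k := fun k => by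
    simp_rw [div_eq_mul_inv, mul_pow, mul_comm _ ((2 : ℝ)⁻¹ ^ k)]
    exact (isBigO_refl _ _).const_mul_left _
  have hpow : (fun τ : ℝ => τ ^ 2) =O[𝓝[>] 0] fun τ => τ := by
    refine IsBigO.of_bound τ₀ ?_
    filter_upwards [hIoc] with τ hτ
    rw [Real.norm_of_nonneg (sq_nonneg τ), Real.norm_of_nonneg hτ.1.le, sq]
    exact mul_le_mul_of_nonneg_right hτ.2 hτ.1.le
  set p := pdx u z₀ with hp
  set q := pdy u z₀ with hq
  set p₁ := fderiv ℝ (fderiv ℝ u) z₀ (1, 0, 0) (1, 0, 0) with hp₁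
  set p₂ := fderiv ℝ (fderiv ℝ u) z₀ (1, 0, 0) (0, 1, 0) with hp₂
  set p₃ := fderiv ℝ (fderiv ℝ u) z₀ (0, 1, 0) (0, 1, 0) with hp₃
  -- `Φ` is minus the first and `Ψ` the second time derivative of the solution of the system with
  -- coefficients frozen at `w`, in terms of the spatial derivatives of the initial data.
  set Φ : (Fin 4 → ℝ) → Fin 4 → ℝ := fun w => eulerFlux γ w p q with hΦ
  set Ψ : (Fin 4 → ℝ) → Fin 4 → ℝ := fun w =>
    eulerFlux γ w (eulerFlux γ w p₁ p₂) (eulerFlux γ w p₂ p₃) with hΨ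
  set D := eulerDFlux γ (u z₀) (fderiv ℝ u z₀ e) p q with hD
  have h0 : u z₀ 0 ≠ 0 := (hpos z₀ hz₀).ne'
  have hsymm : ∀ {f : ℝ × ℝ × ℝ → Fin 4 → ℝ}, ContDiffAt ℝ 3 f z₀ → ∀ a b,
      fderiv ℝ (fderiv ℝ f) z₀ a b = fderiv ℝ (fderiv ℝ f) z₀ b a := fun hf a b =>
    (hf.isSymmSndFDerivAt (by simp; norm_num)) a b
  have hWu : (fun τ => W τ - u (z₀ + (τ / 2) • e)) =O[𝓝[>] 0] fun τ => τ ^ 2 := by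
    refine IsBigO.of_bound K ?_
    filter_upwards [hIoc] with τ hτ
    rw [Real.norm_of_nonneg (sq_nonneg τ)]
    exact hW τ hτ
  have hudiff : DifferentiableAt ℝ u z₀ := huC.differentiableAt (by norm_num)
  have huhalf : (fun τ : ℝ => u (z₀ + (τ / 2) • e) - u z₀) =O[𝓝[>] 0] fun τ => τ := by
    have h := (hasDerivAt_line (f := u) (z := z₀) (e := e) (s := 0)
      (by simpa using hudiff)).differentiableAt.isBigO_sub
    simp only [zero_smul, add_zero, sub_zero] at h
    have h1 : (fun τ : ℝ => τ / 2) =O[𝓝[>] 0] fun τ => τ := by simpa using hhalfO 1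
    exact ((h.mono (nhdsWithin_le_nhds (s := Set.Ioi 0))).comp_tendsto hhalf).trans h1
  have hWu₀ : (fun τ => W τ - u z₀) =O[𝓝[>] 0] fun τ => τ := by
    simpa using (hWu.trans hpow).add huhalf
  have hid : Tendsto (fun τ : ℝ => τ) (𝓝[>] 0) (𝓝 0) := nhdsWithin_le_nhds
  have hWt : Tendsto W (𝓝[>] 0) (𝓝 (u z₀)) :=
    tendsto_sub_nhds_zero_iff.1 (hWu₀.trans_tendsto hid)
  have hut : Tendsto (fun τ : ℝ => u (z₀ + (τ / 2) • e)) (𝓝[>] 0) (𝓝 (u z₀)) :=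
    tendsto_sub_nhds_zero_iff.1 (huhalf.trans_tendsto hid)
  have hW0 : ∀ᶠ τ in 𝓝[>] (0 : ℝ), W τ 0 ≠ 0 :=
    ((continuous_apply 0).continuousAt.tendsto.comp hWt).eventually_ne h0
  -- the midpoint state gives the first-order term up to `O(τ²)`
  have hΦC : ContDiffAt ℝ 2 Φ (u z₀) :=
    ContDiffAt.eulerFlux γ contDiffAt_id contDiffAt_const contDiffAt_const h0
  have hΦO : (fun τ => Φ (W τ) - Φ (u z₀) - (τ / 2) • D) =O[𝓝[>] 0] fun τ => τ ^ 2 := by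
    have h1 : (fun τ => Φ (W τ) - Φ (u (z₀ + (τ / 2) • e))) =O[𝓝[>] 0] fun τ => τ ^ 2 :=
      ((hΦC.hasStrictFDerivAt (by norm_num)).isBigO_sub.comp_tendsto
        (hWt.prodMk_nhds hut)).trans hWu
    have hd : HasDerivAt (fun s : ℝ => Φ (u (z₀ + s • e))) D 0 := by
      have := hasDerivAt_eulerFlux γ (hasDerivAt_line (f := u) (z := z₀) (e := e) (s := 0)
        (by simpa using hudiff)) (hasDerivAt_const 0 p) (hasDerivAt_const 0 q) (by simpa using h0)
      refine this.congr_deriv ?_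
      simp only [zero_smul, add_zero, hD]
      rw [add_eq_right]
      simpa using eulerFlux_add γ (u z₀) 0 0 0 0
    have hC : ContDiffAt ℝ 2 (fun s : ℝ => Φ (u (z₀ + s • e))) 0 := by
      have h2 : ContDiffAt ℝ 2 (fun s : ℝ => z₀ + s • e) 0 := by fun_prop
      have h3 : ContDiffAt ℝ 2 u (z₀ + (0 : ℝ) • e) := by simpa using huC.of_le (by norm_num)
      have h4 := h3.comp (0 : ℝ) h2
      refine ContDiffAt.comp (0 : ℝ) (g := Φ) ?_ h4
      simpa using hΦC
    have h5 := ((taylor_one_isBigO hC hd).comp_tendsto hhalf).trans (hhalfO 2)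
    refine (h1.add h5).congr_left fun τ => ?_
    simp only [Function.comp, zero_smul, add_zero]
    abel
  have hΨO : (fun τ => Ψ (W τ) - Ψ (u z₀)) =O[𝓝[>] 0] fun τ => τ := by
    have hC : ContDiffAt ℝ 1 Ψ (u z₀) :=
      ContDiffAt.eulerFlux γ contDiffAt_id
        (ContDiffAt.eulerFlux γ contDiffAt_id contDiffAt_const contDiffAt_const h0)
        (ContDiffAt.eulerFlux γ contDiffAt_id contDiffAt_const contDiffAt_const h0) h0
    exact ((hC.differentiableAt (by norm_num)).isBigO_sub.comp_tendsto hWt).trans hWu₀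
  have hRu : (fun τ : ℝ => u (z₀ + τ • e) - u z₀ - τ • fderiv ℝ u z₀ e
      - (τ ^ 2 / 2) • fderiv ℝ (fderiv ℝ u) z₀ e e) =O[𝓝[>] 0] fun τ => τ ^ 3 := by
    have hcont : ContinuousAt (iteratedFDeriv ℝ 3 u) z₀ := huC.continuousAt_iteratedFDeriv le_rfl
    have hev := hline_t.eventually ((huC.eventually (by simp)).and
      (hcont.norm.tendsto.eventually_lt_const (lt_add_one _)))
    obtain ⟨ε, hε, hball⟩ := Metric.eventually_nhds_iff.1 hev
    have hball' : ∀ s ∈ Set.Icc 0 (ε / 2), _ := fun s hs => hball (y := s) (by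
        rw [Real.dist_eq, sub_zero, abs_of_nonneg hs.1]; linarith [hs.2])
    refine IsBigO.of_bound (‖iteratedFDeriv ℝ 3 u z₀‖ + 1) ?_
    filter_upwards [Ioo_mem_nhdsGT (half_pos hε)] with s hs
    rw [Real.norm_of_nonneg (pow_nonneg hs.1.le 3)]
    exact norm_taylor_two_le (by positivity) hen (fun s hs => (hball' s hs).1)
      (fun s hs => (hball' s hs).2.le) s ⟨hs.1.le, hs.2.le⟩
  have hz₀' : z₀ ∈ Ω' := hseg tn ⟨le_rfl, by linarith⟩
  have hVC : ∀ τ ∈ Set.Ioc 0 τ₀, ∀ z ∈ Ω', ContDiffAt ℝ 3 (V τ) z := fun τ hτ z hz =>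
    (hV τ hτ).contDiffAt (hΩ'.mem_nhds hz)
  have hRV : (fun τ : ℝ => V τ (z₀ + τ • e) - V τ z₀ - τ • fderiv ℝ (V τ) z₀ e
      - (τ ^ 2 / 2) • fderiv ℝ (fderiv ℝ (V τ)) z₀ e e) =O[𝓝[>] 0] fun τ => τ ^ 3 := by
    refine IsBigO.of_bound (max M 0) ?_
    filter_upwards [hIoc] with τ hτ
    have hmem : ∀ s ∈ Set.Icc 0 τ, z₀ + s • e ∈ Ω' := fun s hs => by
      rw [← hline]
      exact hseg _ ⟨by linarith [hs.1], by linarith [hs.2, hτ.2]⟩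
    rw [Real.norm_of_nonneg (pow_nonneg hτ.1.le 3)]
    refine norm_taylor_two_le (le_max_right _ _) hen (fun s hs => hVC τ hτ _ (hmem s hs))
      (fun s hs => ?_) τ ⟨hτ.1.le, le_rfl⟩
    rw [← iteratedFDerivWithin_of_isOpen 3 hΩ' (hmem s hs)]
    exact (hbdd τ hτ _ (hmem s hs) 3 le_rfl).trans (le_max_left _ _)
  have hu_pde := fderiv_pde γ huC hudiff h0 (by
    filter_upwards [hΩ.mem_nhds hz₀] with z hz using hupde z hz)
  have hu_t : fderiv ℝ u z₀ e = -Φ (u z₀) := by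
    have := hupde z₀ hz₀
    rw [add_assoc, add_eq_zero_iff_eq_neg] at this
    exact this
  set X := eulerDFlux γ (u z₀) p p q with hX
  set Y := eulerDFlux γ (u z₀) q p q with hY
  have hu_tt : fderiv ℝ (fderiv ℝ u) z₀ e e
      = Ψ (u z₀) + eulerFlux γ (u z₀) X Y - D := by
    have ht := hu_pde e
    have hx := hu_pde (1, 0, 0)
    have hy := hu_pde (0, 1, 0)
    rw [hsymm huC (0, 1, 0) (1, 0, 0)] at hy
    rw [← hedef] at ht hx hy
    rw [ht, hsymm huC e (1, 0, 0), hsymm huC e (0, 1, 0), hx, hy, ← hp₁, ← hp₂, ← hp₃, hΨ]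
    change -eulerFlux γ (u z₀) (-eulerFlux γ (u z₀) p₁ p₂ - X) (-eulerFlux γ (u z₀) p₂ p₃ - Y) - D
      = _
    rw [← neg_add', ← neg_add', ← neg_add', eulerFlux_neg, eulerFlux_add, neg_add', neg_neg]
  -- `L` embeds the initial plane `t = tn`, on which `V τ` and `u` agree near `z₀`
  let L : ℝ × ℝ →L[ℝ] ℝ × ℝ × ℝ := (ContinuousLinearMap.fst ℝ ℝ ℝ).prod
    ((ContinuousLinearMap.snd ℝ ℝ ℝ).prod 0)
  have hLx : L (1, 0) = (1, 0, 0) := by simp [L]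
  have hLy : L (0, 1) = (0, 1, 0) := by simp [L]
  have hLz : ∀ r : ℝ × ℝ, z₀ + L r = (xb + r.1, yb + r.2, tn) := fun r => by
    simp [L, hz₀def]
  have hUev : ∀ᶠ r in 𝓝 (0 : ℝ × ℝ), (xb + r.1, yb + r.2) ∈ U := by
    have hc : Continuous fun r : ℝ × ℝ => (xb + r.1, yb + r.2) := by fun_prop
    exact hc.continuousAt.eventually_mem (hU.mem_nhds (by simpa using hxyU))
  have hVinit : ∀ τ ∈ Set.Ioc 0 τ₀, V τ z₀ = u z₀ := fun τ hτ => hinit τ hτ (xb, yb) hxyU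
  have hVagree := fun τ hτ => fderiv_eq_of_eventuallyEq_comp L (hVC τ hτ z₀ hz₀') huC (by
    filter_upwards [hUev] with r hr
    rw [hLz]
    exact hinit τ hτ _ hr)
  have hV_t : ∀ τ ∈ Set.Ioc 0 τ₀, fderiv ℝ (V τ) z₀ e = -Φ (W τ) := by
    intro τ hτ
    have hx := (hVagree τ hτ).1 (1, 0)
    have hy := (hVagree τ hτ).1 (0, 1)
    rw [hLx] at hx
    rw [hLy] at hy
    have := hVpde τ hτ z₀ hz₀'
    rw [add_assoc, add_eq_zero_iff_eq_neg, pdx, pdy, hx, hy] at this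
    exact this
  have hV_tt : ∀ τ ∈ Set.Ioc 0 τ₀, W τ 0 ≠ 0 →
      fderiv ℝ (fderiv ℝ (V τ)) z₀ e e = Ψ (W τ) := by
    intro τ hτ hW0
    have hC := hVC τ hτ z₀ hz₀'
    have hxx := (hVagree τ hτ).2 (1, 0) (1, 0)
    have hxy := (hVagree τ hτ).2 (1, 0) (0, 1)
    have hyy := (hVagree τ hτ).2 (0, 1) (0, 1)
    rw [hLx] at hxx
    rw [hLx, hLy] at hxy
    rw [hLy] at hyy
    have hpde := fderiv_pde γ (w := fun _ => W τ) hC (differentiableAt_const _) hW0 (by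
      filter_upwards [hΩ'.mem_nhds hz₀'] with z hz using hVpde τ hτ z hz)
    simp only [fderiv_fun_const, Pi.zero_apply, _root_.zero_apply, eulerDFlux_zero,
      sub_zero] at hpde
    have ht := hpde e
    have hx := hpde (1, 0, 0)
    have hy := hpde (0, 1, 0)
    rw [hsymm hC (0, 1, 0) (1, 0, 0)] at hy
    rw [← hedef] at ht hx hy
    rw [ht, hsymm hC e (1, 0, 0), hsymm hC e (0, 1, 0), hx, hy, hxx, hxy, hyy, eulerFlux_neg,
      neg_neg]
  -- the correction term is the part of `u_tt` that freezing the coefficients loses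
  set c : Fin 4 → ℝ := ![rho * (f₁ + f₂) + uu * (rx * (2 * ux + vy) + ry * vx)
        + vv * (rx * uy + ry * (ux + 2 * vy)) - h₁,
      uu * f₁ + vv * uy * (ux + vy) + g₁ / rho - px * h₂,
      vv * f₂ + uu * vx * (ux + vy) + g₂ / rho - py * h₂,
      uu * g₁ + vv * g₂ + γ * pp * (f₁ + f₂ - h₁ / rho)] with hc
  suffices hmain : (fun τ : ℝ => V τ (z₀ + τ • e) + (τ ^ 2 / 2) • c - u (z₀ + τ • e))
      =O[𝓝[>] 0] fun τ => τ ^ 3 by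
    obtain ⟨C, hC, hb⟩ := hmain.exists_pos
    obtain ⟨δ, hδ, hb⟩ := mem_nhdsGT_iff_exists_Ioc_subset.1 (hb.bound)
    refine ⟨C, hC, min δ τ₀, ⟨lt_min hδ hτ₀, min_le_right _ _⟩, fun τ hτ => ?_⟩
    have hbτ : _ ≤ C * ‖τ ^ 3‖ := hb ⟨hτ.1, hτ.2.trans (min_le_left _ _)⟩
    rwa [Real.norm_of_nonneg (pow_nonneg hτ.1.le 3)] at hbτ
  have hcXY : c = eulerFlux γ (u z₀) X Y := by
    have hrho0 : rho ≠ 0 := hrho ▸ h0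
    simp only [hc, hX, hY, eulerFlux_eq, eulerDFlux_eq]
    rw [← hrho, ← huu, ← hvv, ← hpp, ← hrx, ← hux, ← hvx, ← hpx, ← hry, ← huy, ← hvy, ← hpy]
    subst hf₁ hf₂ hg₁ hg₂ hh₁ hh₂
    ext i
    fin_cases i <;> simp <;> field_simp <;> ring
  have hτO : (fun τ : ℝ => τ) =O[𝓝[>] 0] fun τ => τ := isBigO_refl _ _
  have hτ2 : (fun τ : ℝ => τ ^ 2 / 2) =O[𝓝[>] 0] fun τ => τ ^ 2 := by
    simp_rw [div_eq_inv_mul]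
    exact (isBigO_refl _ _).const_mul_left _
  have hA := (hτO.smul hΦO).trans_eventuallyEq (g₂ := fun τ => τ ^ 3)
    (.of_forall fun τ => by simp only [smul_eq_mul]; ring)
  have hB := (hτ2.smul hΨO).trans_eventuallyEq (g₂ := fun τ => τ ^ 3)
    (.of_forall fun τ => by simp only [smul_eq_mul]; ring)
  refine (((hRV.sub hRu).sub hA).add hB).congr' ?_ .rfl
  filter_upwards [hIoc, hW0] with τ hτ hW0
  rw [hVinit τ hτ, hV_t τ hτ, hV_tt τ hτ hW0, hu_t, hu_tt, hcXY]
  module
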